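/- (i) If M ∈ SU(2) (i.e., M is a 2×2 complex matrix with M·conj(M)ᵀ = 1 and det M = 1) and tr M = 2, then M = 1; if tr M = -2, then M = -1. (ii) Let U ⊆ ℂ be open, θ ∈ U, and suppose M, S : U → GL₂(ℂ) and μ : U → ℂ \ {0} are holomorphic with M(λ) = S(λ)·diag(μ(λ), μ(λ)⁻¹)·S(λ)⁻¹ for all λ ∈ U, and M(θ) = 1 or M(θ) = -1. Then M'(θ) = 0 if and only if μ'(θ) = 0. -/

import Mathlib

open Matrix

noncomputable section

abbrev M2 : Type := Matrix (Fin 2) (Fin 2) ℂ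

attribute [local instance] Matrix.linftyOpNormedRing Matrix.linftyOpNormedAlgebra

open scoped ComplexOrder in
theorem su2_aux (M : M2) (h : M * Mᴴ = 1) (ht : M.trace = 2) : M = 1 := by
  have key : ((M - 1) * (M - 1)ᴴ).trace = 0 := by
    have e : (M - 1) * (M - 1)ᴴ = M * Mᴴ - M - Mᴴ + 1 := by
      rw [conjTranspose_sub, conjTranspose_one]; noncomm_ring
    rw [e, h, trace_add, trace_sub, trace_sub, trace_conjTranspose, ht]
    simp
  exact sub_eq_zero.mp (Matrix.trace_mul_conjTranspose_self_eq_zero_iff.mp key)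

/-- (i) a matrix `M ∈ SU(2)` with `tr M = 2` (resp. `tr M = -2`) equals `1`
(resp. `-1`); (ii) if `M(λ) = S(λ)·diag(μ(λ), μ(λ)⁻¹)·S(λ)⁻¹` holomorphically on an open set
`U ∋ θ`, with `S(λ)` invertible and `μ(λ) ≠ 0` on `U`, and `M(θ) = ±1`, then `M'(θ) = 0` iff
`μ'(θ) = 0`. -/
theorem closing_conditions_via_eigenvalue :
    (∀ M : M2, M * Mᴴ = 1 → M.det = 1 →
      (M.trace = 2 → M = 1) ∧ (M.trace = -2 → M = -1)) ∧
    (∀ (U : Set ℂ) (θ : ℂ), IsOpen U → θ ∈ U →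
      ∀ (M S : ℂ → M2) (μ : ℂ → ℂ),
        DifferentiableOn ℂ M U → DifferentiableOn ℂ S U → DifferentiableOn ℂ μ U →
        (∀ lam ∈ U, IsUnit (S lam)) →
        (∀ lam ∈ U, μ lam ≠ 0) →
        (∀ lam ∈ U, M lam = S lam * Matrix.diagonal ![μ lam, (μ lam)⁻¹] * (S lam)⁻¹) →
        (M θ = 1 ∨ M θ = -1) →
        (deriv M θ = 0 ↔ deriv μ θ = 0)) := by
  refine ⟨fun M h _ => ⟨su2_aux M h, fun ht => ?_⟩, ?_⟩
  · have := su2_aux (-M) (by simpa using h) (by rw [trace_neg, ht]; simp)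
    rw [← this, neg_neg]
  · intro U θ hU hθ M S μ hM hS hμ hSu hμ0 hMS hε
    have nU := hU.mem_nhds hθ
    have dM := (hM.differentiableAt nU).hasDerivAt
    have dS := (hS.differentiableAt nU).hasDerivAt
    have dμ := (hμ.differentiableAt nU).hasDerivAt
    have hc : ∀ l ∈ U, M l * S l = S l * Matrix.diagonal ![μ l, (μ l)⁻¹] := by
      intro l hl
      have hd := (Matrix.isUnit_iff_isUnit_det _).mp (hSu l hl)
      rw [hMS l hl, Matrix.mul_assoc, Matrix.nonsing_inv_mul _ hd, Matrix.mul_one]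
    have eD : ∀ a b : ℂ, (Matrix.diagonal ![a, b] : M2) =
        a • (Matrix.diagonal ![1, 0] : M2) + b • (Matrix.diagonal ![0, 1] : M2) := by
      intro a b
      ext i j; fin_cases i <;> fin_cases j <;> simp
    have dD : HasDerivAt (fun l => (Matrix.diagonal ![μ l, (μ l)⁻¹] : M2))
        (Matrix.diagonal ![deriv μ θ, -deriv μ θ / μ θ ^ 2]) θ := by
      rw [eD, funext fun l => eD (μ l) (μ l)⁻¹]
      exact (dμ.smul_const _).add ((dμ.fun_inv (hμ0 θ hθ)).smul_const _)
    have d1 := dM.mul dS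
    have d2 := dS.mul dD
    have heq : (M * S) =ᶠ[nhds θ] (S * fun l => (Matrix.diagonal ![μ l, (μ l)⁻¹] : M2)) := by
      filter_upwards [nU] with l hl using hc l hl
    have d3 : deriv S θ * (Matrix.diagonal ![μ θ, (μ θ)⁻¹] : M2) +
        S θ * (Matrix.diagonal ![deriv μ θ, -deriv μ θ / μ θ ^ 2] : M2) =
        deriv M θ * S θ + M θ * deriv S θ := (d2.congr_of_eventuallyEq heq).unique d1
    have hd := (Matrix.isUnit_iff_isUnit_det _).mp (hSu θ hθ)
    have hDθ : (Matrix.diagonal ![μ θ, (μ θ)⁻¹] : M2) = M θ := by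
      have h1 := hc θ hθ
      have h2 : M θ * S θ = S θ * M θ := by
        rcases hε with h | h <;> simp [h]
      exact (hSu θ hθ).mul_left_cancel (h1.symm.trans h2)
    have h2 : M θ * deriv S θ = deriv S θ * M θ := by
      rcases hε with h | h <;> simp [h]
    rw [hDθ, h2, add_comm] at d3
    have d4 := add_right_cancel d3
    constructor
    · intro h
      rw [h, zero_mul] at d4
      have h0 := (hSu θ hθ).mul_left_cancel (d4.trans (mul_zero _).symm)
      simpa using congrFun (congrFun h0 0) 0
    · intro h
      refine (hSu θ hθ).mul_right_cancel (d4.symm.trans ?_)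
      rw [h, eD]
      simp
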